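/- Let $S = K[P_I, Q_J : I \in \binom{[n]}{d}, J \in \binom{[n]}{d+1}]$, let $\mathcal{I}_{d,d+1,n}$ be the ideal generated by the incidence relations $I_{A,B} = \sum_{i \in B \setminus A} (-1)^{|[i]\cap A| + |[i]\cap B|} P_{A \cup i} Q_{B \setminus i}$ for $|A| = d-1$, $|B| = d+2$, and let $\mathcal{R}_{d,n}$ be the ideal generated by the Plücker relations $R_{A,B} = \sum_{i \in B \setminus A} (-1)^{|[i]\cap A| + |[i]\cap B|} P_{A \cup i} P_{B \setminus i}$ for $|A| = d-1$, $|B| = d+1$. Then for every fixed $C \in \binom{[n]}{d+1}$, one has $\mathcal{R}_{d,n} \subseteq \mathcal{I}_{d,d+1,n} : \langle Q_C \rangle^\infty$. -/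

import Mathlib

open Finset MvPolynomial

noncomputable section

variable (K : Type*) [Field K] (d n : ℕ)

/-- The variable `P_I` of the ring `S = K[P_I, Q_J]`, for `I` of size `d`
(junk value `0` for index sets of the wrong size). -/
def PVar (I : Finset (Fin n)) : MvPolynomial (Finset (Fin n) ⊕ Finset (Fin n)) K :=
  if I.card = d then X (Sum.inl I) else 0

/-- The variable `Q_J` of the ring `S = K[P_I, Q_J]`, for `J` of size `d+1`
(junk value `0` for index sets of the wrong size). -/
def QVar (J : Finset (Fin n)) : MvPolynomial (Finset (Fin n) ⊕ Finset (Fin n)) K :=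
  if J.card = d + 1 then X (Sum.inr J) else 0

/-- The incidence relation `I_{A,B}` for `|A| = d-1`, `|B| = d+2`. -/
def incRel (A B : Finset (Fin n)) : MvPolynomial (Finset (Fin n) ⊕ Finset (Fin n)) K :=
  ∑ i ∈ B \ A,
    (-1 : MvPolynomial (Finset (Fin n) ⊕ Finset (Fin n)) K) ^
        ((A.filter (· ≤ i)).card + (B.filter (· ≤ i)).card) *
      PVar K d n (insert i A) * QVar K d n (B.erase i)

/-- The Plücker relation `R_{A,B}` for `|A| = d-1`, `|B| = d+1`. -/
def plRel (A B : Finset (Fin n)) : MvPolynomial (Finset (Fin n) ⊕ Finset (Fin n)) K :=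
  ∑ i ∈ B \ A,
    (-1 : MvPolynomial (Finset (Fin n) ⊕ Finset (Fin n)) K) ^
        ((A.filter (· ≤ i)).card + (B.filter (· ≤ i)).card) *
      PVar K d n (insert i A) * PVar K d n (B.erase i)

/-- The ideal generated by the incidence relations. -/
def incIdeal : Ideal (MvPolynomial (Finset (Fin n) ⊕ Finset (Fin n)) K) :=
  Ideal.span {f | ∃ A B : Finset (Fin n),
    A.card + 1 = d ∧ B.card = d + 2 ∧ f = incRel K d n A B}

/-- The ideal generated by the Plücker relations. -/
def plIdeal : Ideal (MvPolynomial (Finset (Fin n) ⊕ Finset (Fin n)) K) :=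
  Ideal.span {f | ∃ A B : Finset (Fin n),
    A.card + 1 = d ∧ B.card = d + 1 ∧ f = plRel K d n A B}

section Helpers

variable {R : Type*} [CommRing R]

lemma alt_sum_apply {M κ α : Type*} [AddCommGroup M] [Module R M] (s : Finset α)
    (f : α → M [⋀^κ]→ₗ[R] R) (v : κ → M) : (∑ i ∈ s, f i) v = ∑ i ∈ s, f i v := by
  classical
  induction s using Finset.induction_on with
  | empty => simp
  | insert a s ha ih => rw [sum_insert ha, sum_insert ha, AlternatingMap.add_apply, ih]

/-- An alternating form of degree `e + 1` on a free module of rank `e + 2` satisfies the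
Pluecker relations. -/
lemma plk_form {ι : Type*} [Fintype ι] [DecidableEq ι] {e : ℕ} (hι : Fintype.card ι = e + 2)
    (g : (ι → R) [⋀^Fin (e + 1)]→ₗ[R] R) (a : Fin e → ι → R) (b : Fin (e + 2) → ι → R) :
    ∑ k : Fin (e + 2), (-1 : R) ^ (k : ℕ) * g (Matrix.vecCons (b k) a) * g (k.removeNth b) = 0 := by
  have key : ∀ (a : Fin e → ι → R) (x y : ι → R),
      ∑ k : Fin (e + 2), (-1 : R) ^ (k : ℕ) *
        g (Matrix.vecCons ((Matrix.vecCons x (Matrix.vecCons y a) : Fin (e + 2) → ι → R) k) a) *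
        g (k.removeNth (Matrix.vecCons x (Matrix.vecCons y a) : Fin (e + 2) → ι → R)) = 0 := by
    intro a x y
    rw [Fin.sum_univ_succ, Fin.sum_univ_succ]
    have h0 : (0 : Fin (e + 2)).removeNth (Matrix.vecCons x (Matrix.vecCons y a) :
        Fin (e + 2) → ι → R) = Matrix.vecCons y a := by
      ext i j; simp [Fin.removeNth]
    have h1 : (Fin.succ 0 : Fin (e + 2)).removeNth (Matrix.vecCons x (Matrix.vecCons y a) :
        Fin (e + 2) → ι → R) = Matrix.vecCons x a := by
      ext i j
      refine Fin.cases ?_ (fun i => ?_) i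
      · simp [Fin.removeNth]
      · simp [Fin.removeNth]
    have h2 : ∀ i : Fin e, g (Matrix.vecCons (a i) a) = 0 := by
      intro i
      refine g.map_eq_zero_of_eq _ (i := 0) (j := i.succ) ?_ (Fin.succ_ne_zero i).symm
      simp
    rw [h0, h1]
    simp [h2]
    ring
  -- as an alternating map in `b`
  let L : (Fin e → ι → R) → (ι → R) →ₗ[R] (ι → R) [⋀^Fin (e + 1)]→ₗ[R] R := fun a =>
    { toFun := fun x => g.curryLeft x a • g
      map_add' := by intro x y; simp only [map_add, AlternatingMap.add_apply, add_smul]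
      map_smul' := by
        intro r x
        simp only [map_smul, AlternatingMap.smul_apply, RingHom.id_apply, smul_eq_mul, mul_smul] }
  have hG : ∀ a b, AlternatingMap.alternatizeUncurryFin (L a) b =
      ∑ k : Fin (e + 2), (-1 : R) ^ (k : ℕ) * g (Matrix.vecCons (b k) a) * g (k.removeNth b) := by
    intro a b
    rw [AlternatingMap.alternatizeUncurryFin_apply]
    refine Finset.sum_congr rfl fun k _ => ?_
    simp [L, mul_assoc]
  let H : (ι → R) [⋀^Fin e]→ₗ[R] R :=
    ∑ k : Fin (e + 2), ((-1 : R) ^ (k : ℕ) * g (k.removeNth b)) • g.curryLeft (b k)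
  have hH : ∀ a, H a =
      ∑ k : Fin (e + 2), (-1 : R) ^ (k : ℕ) * g (Matrix.vecCons (b k) a) * g (k.removeNth b) := by
    intro a
    simp only [H, alt_sum_apply, AlternatingMap.smul_apply,
      AlternatingMap.curryLeft_apply_apply, smul_eq_mul]
    exact Finset.sum_congr rfl fun k _ => by ring
  rw [← hH]
  suffices h : H = 0 by rw [h]; rfl
  refine Module.Basis.ext_alternating (Pi.basisFun R ι) fun u hu => ?_
  rw [hH, ← hG]
  suffices h : AlternatingMap.alternatizeUncurryFin (L fun i => (Pi.basisFun R ι) (u i)) = 0 by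
    rw [h]; rfl
  refine Module.Basis.ext_alternating (Pi.basisFun R ι) fun w hw => ?_
  -- the two missing indices
  have hc : ((univ.image u)ᶜ : Finset ι).card = 2 := by
    rw [card_compl, card_image_of_injective _ hu, hι]; simp
  obtain ⟨x, y, hxy, hxy'⟩ := Finset.card_eq_two.1 hc
  have hx : ∀ i, u i ≠ x := by
    intro i hi
    have : x ∈ ((univ.image u)ᶜ : Finset ι) := by rw [hxy']; simp
    simp at this
    exact this i hi
  have hy : ∀ i, u i ≠ y := by
    intro i hi
    have : y ∈ ((univ.image u)ᶜ : Finset ι) := by rw [hxy']; simp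
    simp at this
    exact this i hi
  have hwb : Function.Bijective w :=
    (Fintype.bijective_iff_injective_and_card w).2 ⟨hw, by simp [hι]⟩
  let w' : Fin (e + 2) → ι := Matrix.vecCons x (Matrix.vecCons y u)
  have hw' : Function.Injective w' := by
    have h1 : Function.Injective (Fin.cons y u : Fin (e + 1) → ι) :=
      Fin.cons_injective_iff.2 ⟨by rintro ⟨i, hi⟩; exact hy i hi, hu⟩
    refine Fin.cons_injective_iff.2 ⟨?_, h1⟩
    rintro ⟨i, hi⟩
    revert hi
    refine Fin.cases ?_ (fun i => ?_) i
    · intro h; exact hxy h.symm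
    · intro h; exact hx i h
  have hwb' : Function.Bijective w' :=
    (Fintype.bijective_iff_injective_and_card w').2 ⟨hw', by simp [hι]⟩
  let σ : Equiv.Perm (Fin (e + 2)) :=
    (Equiv.ofBijective w hwb).trans (Equiv.ofBijective w' hwb').symm
  have hσ : ∀ i, w' (σ i) = w i := by
    intro i
    exact (Equiv.ofBijective w' hwb').apply_symm_apply _
  have e1 : (fun i => (Pi.basisFun R ι) (w i)) = (fun i => (Pi.basisFun R ι) (w' i)) ∘ σ := by
    funext i; simp only [Function.comp, hσ]
  have e2 : (fun i => (Pi.basisFun R ι) (w' i)) =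
      Matrix.vecCons ((Pi.basisFun R ι) x) (Matrix.vecCons ((Pi.basisFun R ι) y)
        fun i => (Pi.basisFun R ι) (u i)) := by
    funext i
    refine Fin.cases rfl (fun i => ?_) i
    refine Fin.cases rfl (fun i => rfl) i
  rw [e1, AlternatingMap.map_perm, e2, hG, key]
  simp

/-- Replacing all arguments. -/
lemma alt_comp_eq {M : Type*} [AddCommGroup M] [Module R M] {e : ℕ}
    (p : M [⋀^Fin (e + 1)]→ₗ[R] R) (T : M →ₗ[R] M)
    (h : ∀ x, p.curryLeft (T x) = p.curryLeft x) (v : Fin (e + 1) → M) :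
    p (fun i => T (v i)) = p v := by
  have h1 : ∀ (v : Fin (e + 1) → M) (i : Fin (e + 1)), p (Function.update v i (T (v i))) = p v := by
    intro v i
    have a1 : ∀ x, p (Function.update v i x) = (-1) ^ (i : ℕ) • p.curryLeft x (i.removeNth v) := by
      intro x
      rw [← Fin.insertNth_removeNth, AlternatingMap.map_insertNth,
        AlternatingMap.curryLeft_apply_apply]
    rw [a1, h, ← a1, Function.update_eq_self]
  have h2 : ∀ s : Finset (Fin (e + 1)), p (fun i => if i ∈ s then T (v i) else v i) = p v := by
    intro s
    induction s using Finset.induction_on with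
    | empty => simp
    | insert a s ha ih =>
      rw [← ih, ← h1 (fun i => if i ∈ s then T (v i) else v i) a]
      congr 1
      funext i
      by_cases hi : i = a
      · subst hi; simp [ha]
      · simp [hi]
  simpa using h2 univ

lemma plk_of_factor {n : ℕ} {C : Finset (Fin n)} {e : ℕ} (hC : C.card = e + 2)
    (p : (Fin n → R) [⋀^Fin (e + 1)]→ₗ[R] R)
    (h : ∀ j, ∃ t : C → R, p.curryLeft (∑ i : C, t i • Pi.single (i : Fin n) (1 : R)) =
      p.curryLeft (Pi.single j 1))
    (a : Fin e → Fin n → R) (b : Fin (e + 2) → Fin n → R) :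
    ∑ k : Fin (e + 2), (-1 : R) ^ (k : ℕ) * p (Matrix.vecCons (b k) a) * p (k.removeNth b) = 0 := by
  choose t ht using h
  let π : (Fin n → R) →ₗ[R] (C → R) := (Pi.basisFun R (Fin n)).constr R t
  let ι : (C → R) →ₗ[R] (Fin n → R) :=
    (Pi.basisFun R C).constr R (fun i => Pi.single (i : Fin n) (1 : R))
  have hT : ∀ x, p.curryLeft ((ι ∘ₗ π) x) = p.curryLeft x := by
    intro x
    have : p.curryLeft ∘ₗ (ι ∘ₗ π) = p.curryLeft := by
      refine (Pi.basisFun R (Fin n)).ext fun j => ?_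
      have e1 : π ((Pi.basisFun R (Fin n)) j) = t j := Module.Basis.constr_basis _ _ _ _
      rw [LinearMap.comp_apply, LinearMap.comp_apply, e1, Pi.basisFun_apply, ← ht]
      congr 1
      simp [ι, Module.Basis.constr_apply_fintype]
    exact LinearMap.congr_fun this x
  have hp : ∀ v, p v = (p.compLinearMap ι) (fun i => π (v i)) := by
    intro v
    exact (alt_comp_eq p (ι ∘ₗ π) hT v).symm
  rw [← plk_form (by simp [hC]) (p.compLinearMap ι) (fun i => π (a i)) (fun i => π (b i))]
  refine Finset.sum_congr rfl fun k _ => ?_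
  rw [hp, hp]
  congr 3
  funext i
  refine Fin.cases rfl (fun i => rfl) i

lemma alt_ext_sorted {n e : ℕ} (f : (Fin n → R) [⋀^Fin e]→ₗ[R] R)
    (h : ∀ v : Fin e → Fin n, StrictMono v → f (fun i => Pi.single (v i) 1) = 0) : f = 0 := by
  refine Module.Basis.ext_alternating (Pi.basisFun R (Fin n)) fun v hv => ?_
  have hm : StrictMono (v ∘ Tuple.sort v) :=
    (Tuple.monotone_sort v).strictMono_of_injective (hv.comp (Tuple.sort v).injective)
  have e1 : (fun i => (Pi.basisFun R (Fin n)) (v i)) =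
      (fun i => Pi.single ((v ∘ Tuple.sort v) i) (1 : R)) ∘ (Tuple.sort v).symm := by
    funext i; simp
  rw [e1, AlternatingMap.map_perm, h _ hm]
  simp

lemma exists_alt {n m : ℕ} (P : Finset (Fin n) → R) :
    ∃ p : (Fin n → R) [⋀^Fin m]→ₗ[R] R, ∀ v : Fin m → Fin n, StrictMono v →
      p (fun i => Pi.single (v i) 1) = P (univ.image v) := by
  classical
  refine ⟨∑ f : Fin m → Fin n with StrictMono f, P (univ.image f) •
    (Matrix.detRowAlternating (R := R) (n := Fin m)).compLinearMap (LinearMap.funLeft R R f), ?_⟩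
  intro v hv
  rw [alt_sum_apply, Finset.sum_eq_single_of_mem v (by simp [hv])]
  · rw [AlternatingMap.smul_apply, AlternatingMap.compLinearMap_apply]
    have : (fun i => (LinearMap.funLeft R R v) (Pi.single (v i) 1)) = (1 : Matrix (Fin m) (Fin m) R) := by
      funext i j
      simp [LinearMap.funLeft_apply, Matrix.one_apply, Pi.single_apply, hv.injective.eq_iff, eq_comm]
    have h1 : Matrix.detRowAlternating (fun i => (LinearMap.funLeft R R v) (Pi.single (v i) 1)) =
        (1 : R) := by
      rw [this]; exact Matrix.det_one
    refine (congrArg (fun z => P (univ.image v) • z) h1).trans ?_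
    simp
  · intro f hf hfv
    have hf : StrictMono f := by simpa using hf
    have : ∃ k, v k ∉ Set.range f := by
      by_contra! hcon
      apply hfv
      have hs : univ.image v ⊆ univ.image f := by
        intro x hx
        simp only [mem_image, mem_univ, true_and] at hx ⊢
        obtain ⟨k, rfl⟩ := hx
        exact hcon k
      have := Finset.eq_of_subset_of_card_le hs (by
        rw [card_image_of_injective _ hf.injective, card_image_of_injective _ hv.injective])
      refine (hf.range_inj hv).1 ?_
      have := congrArg (fun s : Finset (Fin n) => (s : Set (Fin n))) this
      simpa using this.symm
    obtain ⟨k, hk⟩ := this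
    rw [AlternatingMap.smul_apply, AlternatingMap.compLinearMap_apply,
      AlternatingMap.map_coord_zero _ k, smul_zero]
    funext j
    simp only [LinearMap.funLeft_apply, Pi.zero_apply, Pi.single_apply]
    rw [if_neg]
    exact fun h => hk ⟨j, h⟩

lemma image_comp_succAbove {n m : ℕ} (c : Fin (m + 1) → Fin n) (hc : StrictMono c)
    (k : Fin (m + 1)) : univ.image (k.removeNth c) = (univ.image c).erase (c k) := by
  ext x
  simp only [mem_image, mem_univ, true_and, mem_erase, Fin.removeNth]
  constructor
  · rintro ⟨i, rfl⟩
    exact ⟨fun h => Fin.succAbove_ne k i (hc.injective h), _, rfl⟩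
  · rintro ⟨h, i, rfl⟩
    obtain ⟨j, hj⟩ := Fin.exists_succAbove_eq (show i ≠ k from fun h' => h (by rw [h']))
    exact ⟨j, by rw [hj]⟩

lemma card_filter_le {n m : ℕ} (c : Fin (m + 1) → Fin n) (hc : StrictMono c)
    (k : Fin (m + 1)) : ((univ.image c).filter (· ≤ c k)).card = k + 1 := by
  have : (univ.image c).filter (· ≤ c k) = (Finset.Iic k).image c := by
    ext x
    simp only [mem_filter, mem_image, mem_univ, true_and, mem_Iic]
    constructor
    · rintro ⟨⟨i, rfl⟩, h⟩; exact ⟨i, hc.le_iff_le.1 h, rfl⟩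
    · rintro ⟨i, h, rfl⟩; exact ⟨⟨i, rfl⟩, hc.le_iff_le.2 h⟩
  rw [this, card_image_of_injective _ hc.injective, Fin.card_Iic]

lemma alt_cons {n e : ℕ} (P : Finset (Fin n) → R) (p : (Fin n → R) [⋀^Fin (e + 1)]→ₗ[R] R)
    (hp : ∀ v : Fin (e + 1) → Fin n, StrictMono v →
      p (fun i => Pi.single (v i) 1) = P (univ.image v))
    (a : Fin e → Fin n) (ha : StrictMono a) (i : Fin n) (hi : i ∉ univ.image a) :
    p (Matrix.vecCons (Pi.single i 1) fun k => Pi.single (a k) 1) =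
      (-1) ^ ((univ.image a).filter (· ≤ i)).card * P (insert i (univ.image a)) := by
  have hcard : (insert i (univ.image a)).card = e + 1 := by
    rw [card_insert_of_notMem hi, card_image_of_injective _ ha.injective]; simp
  let c := (insert i (univ.image a)).orderEmbOfFin hcard
  have hc : StrictMono c := c.strictMono
  have hci : univ.image c = insert i (univ.image a) := by
    apply Finset.coe_injective
    simp [c]
  obtain ⟨k, hk⟩ : ∃ k, c k = i := by
    have : i ∈ univ.image c := by rw [hci]; simp
    simpa using this
  have hrem : univ.image (k.removeNth c) = univ.image a := by
    rw [image_comp_succAbove _ hc, hci, hk, erase_insert hi]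
  have hra : k.removeNth c = a := by
    have hm : StrictMono (k.removeNth c) := hc.comp (Fin.strictMono_succAbove k)
    refine (hm.range_inj ha).1 ?_
    have := congrArg (fun s : Finset (Fin n) => (s : Set (Fin n))) hrem
    simpa using this
  have hcnt : ((univ.image a).filter (· ≤ i)).card = k := by
    have h1 := card_filter_le c hc k
    rw [hci, hk, filter_insert, if_pos le_rfl, card_insert_of_notMem] at h1
    · omega
    · exact fun h => hi (mem_filter.1 h).1
  rw [hcnt, ← hci, ← hp c hc, ← AlternatingMap.neg_one_pow_smul_map_insertNth p k]
  have : (k.insertNth (Pi.single i 1) fun k => Pi.single (a k) 1 : Fin (e + 1) → Fin n → R) =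
      fun j => Pi.single (c j) 1 := by
    rw [Fin.insertNth_eq_iff]
    refine ⟨by rw [hk], ?_⟩
    funext j
    rw [← hra]
    rfl
  rw [this]
  simp [zsmul_eq_mul]

lemma sum_eq_alt {n e : ℕ} (P : Finset (Fin n) → R) (p : (Fin n → R) [⋀^Fin (e + 1)]→ₗ[R] R)
    (hp : ∀ v : Fin (e + 1) → Fin n, StrictMono v →
      p (fun i => Pi.single (v i) 1) = P (univ.image v))
    (a : Fin e → Fin n) (ha : StrictMono a) (B : Finset (Fin n)) (Q : Finset (Fin n) → R) :
    ∑ i ∈ B \ univ.image a, (-1 : R) ^ (((univ.image a).filter (· ≤ i)).card +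
        (B.filter (· ≤ i)).card) * P (insert i (univ.image a)) * Q (B.erase i) =
    ∑ i ∈ B, (-1 : R) ^ (B.filter (· ≤ i)).card *
      p (Matrix.vecCons (Pi.single i 1) fun k => Pi.single (a k) 1) * Q (B.erase i) := by
  symm
  rw [← Finset.sum_subset (sdiff_subset : B \ univ.image a ⊆ B)]
  · refine Finset.sum_congr rfl fun i hi => ?_
    rw [alt_cons P p hp a ha i (mem_sdiff.1 hi).2, pow_add]
    ring
  · intro i hB hi
    have : i ∈ univ.image a := by
      by_contra h
      exact hi (mem_sdiff.2 ⟨hB, h⟩)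
    simp only [mem_image, mem_univ, true_and] at this
    obtain ⟨k, rfl⟩ := this
    rw [p.map_eq_zero_of_eq _ (i := 0) (j := k.succ) (by simp) (Fin.succ_ne_zero k).symm]
    simp

lemma exists_sorted {n m : ℕ} (A : Finset (Fin n)) (hA : A.card = m) :
    ∃ a : Fin m → Fin n, StrictMono a ∧ univ.image a = A := by
  refine ⟨A.orderEmbOfFin hA, (A.orderEmbOfFin hA).strictMono, ?_⟩
  apply Finset.coe_injective
  simp

theorem plk_abstract {n e : ℕ} (P Q : Finset (Fin n) → R) (C : Finset (Fin n))
    (hC : C.card = e + 2) (hu : IsUnit (Q C))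
    (hI : ∀ A B : Finset (Fin n), A.card = e → B.card = e + 3 →
      ∑ i ∈ B \ A, (-1 : R) ^ ((A.filter (· ≤ i)).card + (B.filter (· ≤ i)).card) *
        P (insert i A) * Q (B.erase i) = 0)
    (A B : Finset (Fin n)) (hA : A.card = e) (hB : B.card = e + 2) :
      ∑ i ∈ B \ A, (-1 : R) ^ ((A.filter (· ≤ i)).card + (B.filter (· ≤ i)).card) *
        P (insert i A) * P (B.erase i) = 0 := by
  obtain ⟨p, hp⟩ := exists_alt (m := e + 1) P
  have hfac : ∀ j, ∃ t : C → R, p.curryLeft (∑ i : C, t i • Pi.single (i : Fin n) (1 : R)) =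
      p.curryLeft (Pi.single j 1) := by
    intro j
    by_cases hj : j ∈ C
    · refine ⟨Pi.single ⟨j, hj⟩ 1, ?_⟩
      congr 1
      rw [Finset.sum_eq_single_of_mem (⟨j, hj⟩ : C) (mem_univ _)]
      · simp
      · intro i _ hi; simp [hi]
    · obtain ⟨q, hq⟩ := hu.exists_right_inv
      let s : Fin n → R := fun i => (-1 : R) ^ ((insert j C).filter (· ≤ i)).card
      have hrel : ∑ i ∈ insert j C, (s i * Q ((insert j C).erase i)) •
          p.curryLeft (Pi.single i 1) = 0 := by
        refine alt_ext_sorted _ fun a ha => ?_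
        have h1 := hI (univ.image a) (insert j C)
          (by rw [card_image_of_injective _ ha.injective]; simp)
          (by rw [card_insert_of_notMem hj, hC])
        rw [sum_eq_alt P p hp a ha] at h1
        rw [alt_sum_apply, ← h1]
        refine Finset.sum_congr rfl fun i _ => ?_
        simp only [AlternatingMap.smul_apply, AlternatingMap.curryLeft_apply_apply, smul_eq_mul, s]
        ring
      rw [Finset.sum_insert hj, erase_insert hj] at hrel
      refine ⟨fun i => -(q * s j * (s i * Q ((insert j C).erase i))), ?_⟩
      have hs : s j * s j = 1 := by
        simp only [s]; rw [← mul_pow]; simp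
      have h2 : (q * s j) • ((s j * Q C) • p.curryLeft (Pi.single j 1)) =
          p.curryLeft (Pi.single j 1) := by
        rw [smul_smul, show q * s j * (s j * Q C) = (s j * s j) * (Q C * q) by ring, hs, hq,
          one_mul, one_smul]
      rw [← h2, eq_neg_of_add_eq_zero_left hrel, map_sum, smul_neg, Finset.smul_sum,
        ← Finset.sum_coe_sort C, ← Finset.sum_neg_distrib]
      refine Finset.sum_congr rfl fun i _ => ?_
      rw [map_smul, smul_smul, ← neg_smul]
  obtain ⟨a, ha, rfl⟩ := exists_sorted A hA
  obtain ⟨b, hb, rfl⟩ := exists_sorted B hB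
  rw [sum_eq_alt P p hp a ha, Finset.sum_image (fun x _ y _ h => hb.injective h)]
  have := plk_of_factor hC p hfac (fun k => Pi.single (a k) 1) (fun k => Pi.single (b k) 1)
  rw [← neg_eq_zero, ← Finset.sum_neg_distrib, ← this]
  refine Finset.sum_congr rfl fun k _ => ?_
  rw [card_filter_le b hb, ← image_comp_succAbove b hb,
    ← hp (k.removeNth b) (hb.comp (Fin.strictMono_succAbove k)), pow_succ]
  have : (k.removeNth fun k => (Pi.single (b k) 1 : Fin n → R)) =
    fun i => Pi.single (k.removeNth b i) 1 := rfl
  rw [this]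
  ring

end Helpers

/-- the Plücker ideal is contained in the saturation of the incidence
ideal with respect to `Q_C`, for any fixed `C` of size `d+1`. -/
theorem plucker_ideal_subset_saturation_of_incidence_ideal
    (C : Finset (Fin n)) (hC : C.card = d + 1) :
    ∀ g ∈ plIdeal K d n, ∃ k : ℕ, QVar K d n C ^ k * g ∈ incIdeal K d n := by
  intro g hg
  rcases d with _ | e
  · have : plIdeal K 0 n = ⊥ := by
      rw [plIdeal, Ideal.span_eq_bot]
      rintro x ⟨A, B, h, _⟩
      omega
    rw [this, Ideal.mem_bot] at hg
    exact ⟨0, by simp [hg]⟩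
  · let I := incIdeal K (e + 1) n
    let y := Ideal.Quotient.mk I (QVar K (e + 1) n C)
    let φ := (algebraMap _ (Localization.Away y)).comp (Ideal.Quotient.mk I)
    have hφI : ∀ x ∈ I, φ x = 0 := by
      intro x hx
      simp only [φ, RingHom.comp_apply]
      rw [Ideal.Quotient.eq_zero_iff_mem.2 hx, map_zero]
    have hker : plIdeal K (e + 1) n ≤ RingHom.ker φ := by
      rw [plIdeal, Ideal.span_le]
      rintro x ⟨A, B, hA, hB, rfl⟩
      have := plk_abstract (fun s => φ (PVar K (e + 1) n s)) (fun s => φ (QVar K (e + 1) n s)) C hC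
        (IsLocalization.Away.algebraMap_isUnit y) (by
          intro A B hA hB
          have h := hφI (incRel K (e + 1) n A B) (Ideal.subset_span ⟨A, B, by omega, by omega, rfl⟩)
          simpa [incRel] using h) A B (by omega) (by omega)
      simpa [plRel, RingHom.mem_ker] using this
    have h0 : algebraMap _ (Localization.Away y) (Ideal.Quotient.mk I g) = 0 := hker hg
    rw [IsLocalization.map_eq_zero_iff (Submonoid.powers y)] at h0
    obtain ⟨⟨_, k, rfl⟩, hk⟩ := h0
    refine ⟨k, ?_⟩
    rw [← Ideal.Quotient.eq_zero_iff_mem, map_mul, map_pow]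
    exact hk

end
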